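/- arXiv:1903.06600 — 4 statements merged into one kernel-verified Lean document; each statement's English description precedes it below -/
import Mathlib

section
/- Let C be an alternating circuit of length 6 in a balanced red-blue graph (the underlying graph is simple, so loops are forbidden). Then there is at most one vertex which is visited more than once by C, and if such a vertex exists, C is a bow-tie (the repeated vertex is visited exactly twice and the other four vertices are distinct). -/
/-! In a closed trail of length six in a simple graph, two positions at cyclic distance one
carry different vertices because there are no loops, and two positions at cyclic distance two
do so because otherwise the edge between them would be traversed forth and back. Hence only
antipodal positions can carry the same vertex (`eq_add_three_of_eq`). Two coinciding antipodal
pairs would identify two opposite edges, so at most one antipodal pair coincides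
(`antipodal_unique`), and both claims follow. -/

/-- `IsAltCircuit G c n v` : the vertex sequence `v 0, v 1, …, v n` (with `v n = v 0`)
is an alternating circuit in the graph `G` whose edges are two-colored by `c`
(`true` = red, `false` = blue): it is a closed trail (consecutive vertices adjacent, no
edge traversed twice) and the colors of cyclically consecutive edges differ. -/
def IsAltCircuit {V : Type*} (G : SimpleGraph V) (c : Sym2 V → Bool)
    (n : ℕ) (v : ℕ → V) : Prop :=
  0 < n ∧ v n = v 0 ∧
  (∀ k, k < n → G.Adj (v k) (v (k + 1))) ∧
  (∀ k l, k < l → l < n → s(v k, v (k + 1)) ≠ s(v l, v (l + 1))) ∧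
  (∀ k, k + 1 < n → c s(v k, v (k + 1)) ≠ c s(v (k + 1), v (k + 2))) ∧
  c s(v (n - 1), v n) ≠ c s(v 0, v 1)

/-- Two positions carrying the same vertex are antipodal: cyclic distance one would give a
loop, and cyclic distance two would traverse an edge forth and back. -/
theorem eq_add_three_of_eq {V : Type*} (G : SimpleGraph V) (v : ℕ → V) (h60 : v 6 = v 0)
    (hadj : ∀ k, k < 6 → G.Adj (v k) (v (k + 1)))
    (htr : ∀ k l, k < l → l < 6 → s(v k, v (k + 1)) ≠ s(v l, v (l + 1)))
    {a b : ℕ} (hab : a < b) (hb : b < 6) (h : v a = v b) : b = a + 3 := by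
  have step1 : ∀ k, k < 6 → v k ≠ v (k + 1) := fun k hk => (hadj k hk).ne
  have step2 : ∀ k, k < 5 → v k ≠ v (k + 2) := by
    intro k hk e
    apply htr k (k + 1) (by omega) (by omega)
    rw [e, Sym2.eq_swap]
  -- The remaining cyclic adjacencies, those passing through position `6 = 0`.
  have h05 : v 0 ≠ v 5 := fun e => step1 5 (by norm_num) (e.symm.trans h60.symm)
  have h04 : v 0 ≠ v 4 := fun e => step2 4 (by norm_num) (e.symm.trans h60.symm)
  have h15 : v 1 ≠ v 5 := by
    intro e
    apply htr 0 5 (by norm_num) (by norm_num)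
    rw [h60, zero_add, e, Sym2.eq_swap]
  obtain rfl | rfl | rfl | ⟨rfl, rfl⟩ | ⟨rfl, rfl⟩ | ⟨rfl, rfl⟩ :
      b = a + 1 ∨ b = a + 2 ∨ b = a + 3 ∨ (a = 0 ∧ b = 4) ∨ (a = 1 ∧ b = 5) ∨
        (a = 0 ∧ b = 5) := by omega
  · exact (step1 a (by omega) h).elim
  · exact (step2 a (by omega) h).elim
  · rfl
  · exact (h04 h).elim
  · exact (h15 h).elim
  · exact (h05 h).elim

/-- Any two of the three antipodal pairs of positions span two opposite edges of the circuit;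
if both pairs coincided, these two edges would be equal. -/
theorem antipodal_unique {V : Type*} (v : ℕ → V) (h60 : v 6 = v 0)
    (htr : ∀ k l, k < l → l < 6 → s(v k, v (k + 1)) ≠ s(v l, v (l + 1)))
    (a b : ℕ) (ha : a < 3) (hb : b < 3) (h : v a = v (a + 3)) (h' : v b = v (b + 3)) :
    a = b := by
  have n01 : v 0 = v 3 → v 1 = v 4 → False := fun e f =>
    htr 0 3 (by norm_num) (by norm_num) (by rw [zero_add, e, f])
  have n12 : v 1 = v 4 → v 2 = v 5 → False := fun e f =>
    htr 1 4 (by norm_num) (by norm_num) (by rw [e, f])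
  -- The opposite edges here are `v 2 v 3` and `v 5 v 6`, with `v 6 = v 0`.
  have n02 : v 0 = v 3 → v 2 = v 5 → False := fun e f =>
    htr 2 5 (by norm_num) (by norm_num) (by rw [f, h60, e])
  interval_cases a <;> interval_cases b <;> first | rfl | (exfalso; simp at h h'; tauto)

/-- Let `C` be an alternating circuit of length 6 in a balanced red-blue
graph.  Then at most one vertex is visited more than once by `C`, and if such a vertex
exists then `C` is a bow-tie: the repeated vertex is visited exactly twice and the other
four vertices are distinct.  (Equivalently: any two repetitions among the six visited
positions involve the same vertex, and at least five distinct vertices are visited.) -/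
theorem stmt2 {V : Type*} [Fintype V] [DecidableEq V]
    (G : SimpleGraph V) [DecidableRel G.Adj] (c : Sym2 V → Bool)
    (hbal : ∀ w : V,
      ((G.neighborFinset w).filter fun u => c s(w, u) = true).card =
        ((G.neighborFinset w).filter fun u => c s(w, u) = false).card)
    (v : ℕ → V) (hC : IsAltCircuit G c 6 v) :
    (∀ a b a' b', a < b → b < 6 → a' < b' → b' < 6 →
      v a = v b → v a' = v b' → v a = v a') ∧
    5 ≤ ((Finset.range 6).image v).card := by
  obtain ⟨-, h60, hadj, htr, -, -⟩ := hC
  have key : ∀ a b, a < b → b < 6 → v a = v b → b = a + 3 := fun a b hab hb h =>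
    eq_add_three_of_eq G v h60 hadj htr hab hb h
  have two := antipodal_unique v h60 htr
  constructor
  · intro a b a' b' hab hb hab' hb' h h'
    obtain rfl := key a b hab hb h
    obtain rfl := key a' b' hab' hb' h'
    rw [two a a' (by omega) (by omega) h h']
  · -- Deleting one position of the coinciding antipodal pair (any position, if there is
    -- no such pair) leaves five positions on which `v` is injective.
    obtain ⟨i, hi, hrep⟩ : ∃ i, i < 3 ∧ ∀ a, a < 3 → v a = v (a + 3) → a = i := by
      by_cases hex : ∃ i, i < 3 ∧ v i = v (i + 3)
      · obtain ⟨i, hi, h⟩ := hex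
        exact ⟨i, hi, fun a ha h' => two a i ha hi h' h⟩
      · exact ⟨0, by norm_num, fun a ha h' => (hex ⟨a, ha, h'⟩).elim⟩
    have hne : ∀ a b, a < b → b < 6 → a ≠ i → v a ≠ v b := by
      intro a b hab hb hai h
      obtain rfl := key a b hab hb h
      exact hai (hrep a (by omega) h)
    have hinj : Set.InjOn v ((Finset.range 6).erase i : Finset ℕ) := by
      intro a ha b hb h
      simp only [Finset.mem_coe, Finset.mem_erase, Finset.mem_range] at ha hb
      rcases lt_trichotomy a b with hlt | heq | hgt
      · exact (hne a b hlt hb.2 ha.1 h).elim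
      · exact heq
      · exact (hne b a hgt ha.2 hb.1 h.symm).elim
    calc 5 = ((Finset.range 6).erase i).card := by
          rw [Finset.card_erase_of_mem (Finset.mem_range.2 (by omega)), Finset.card_range]
      _ = (((Finset.range 6).erase i).image v).card := (Finset.card_image_of_injOn hinj).symm
      _ ≤ _ := Finset.card_le_card (Finset.image_subset_image (Finset.erase_subset _ _))
end

section
/- Let M be a symmetric k×k integer matrix with 0's on the diagonal, such that each row sum and each column sum lies in the interval [1, k−2], and the row sum of the first row is minimal among all row sums. Suppose all entries of M are 0 or 1, except for at most two symmetric pairs of entries equal to +2 located in the first row and first column, and at most one symmetric pair of entries equal to −1 located anywhere in the matrix. Then there exists a sequence of at most 2 switches that transforms M into a matrix all of whose entries are 0 or 1, except for at most one symmetric pair of entries equal to −1. -/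
/-!
View `M` as an integer weighting of the edges of the complete graph on `Fin n`, with `0` the vertex
of minimal degree. Each double edge `0b` can be removed by a single switch that creates no new `2`
and does not increase the number of `-1` pairs; doing this at most twice proves the theorem.

The switch adds `1` to `0x` and `bw` and subtracts `1` from `0b` and `wx`.

* The vertex `w` is any vertex outside `{0, b}` with `M b w ≤ 0`. One exists since the `n - 2`
  entries of row `b` outside `{0, b}` sum to at most `n - 4`.
* The vertex `x` lies outside `{0, b, w}` and has `M 0 x < M w x`. One exists since row `w` sums to
  at least as much as row `0`, while the columns `0` and `w` together contribute the same to both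
  rows by symmetry, and column `b` contributes at least `2` more to row `0`.

As `M w x ≤ 1`, either `M w x = 1`, and then no entry becomes `-1`, or `M w x = 0` and
`M 0 x = -1`, and then the `-1` pair moves from `0x` to `wx`.
-/

open BigOperators

/-- The symmetric `n × n` 0–1 matrix `A_{xy}` whose only nonzero entries are `1`'s at
positions `(x,y)` and `(y,x)`. -/
def adjPair {n : ℕ} (x y : Fin n) : Matrix (Fin n) (Fin n) ℤ :=
  Matrix.of fun i j => if (i = x ∧ j = y) ∨ (i = y ∧ j = x) then 1 else 0

/-- `M'` is obtained from `M` by a single switch along four pairwise distinct indices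
`(x, y; z, w)`:  `M' = M + A_{xz} − A_{zy} + A_{yw} − A_{wx}`. -/
def IsSwitchStep {n : ℕ} (M M' : Matrix (Fin n) (Fin n) ℤ) : Prop :=
  ∃ x y z w : Fin n, x ≠ y ∧ x ≠ z ∧ x ≠ w ∧ y ≠ z ∧ y ≠ w ∧ z ≠ w ∧
    M' = M + adjPair x z - adjPair z y + adjPair y w - adjPair w x

/-- The hypotheses of the theorem that survive a switch removing a double edge, relative to the
vertex `o` of minimal degree. That there is at most one pair of `-1` entries is encoded by naming
a position `(p, q)` that contains it, if it exists. -/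
structure Good {n : ℕ} (o : Fin n) (M : Matrix (Fin n) (Fin n) ℤ) : Prop where
  symm : ∀ i j, M i j = M j i
  diag : ∀ i, M i i = 0
  row_le : ∀ i, ∑ j, M i j ≤ (n : ℤ) - 2
  row_min : ∀ i, ∑ j, M o j ≤ ∑ j, M i j
  entries : ∀ i j, M i j = 0 ∨ M i j = 1 ∨ M i j = 2 ∨ M i j = -1
  two_loc : ∀ i j, M i j = 2 → i = o ∨ j = o
  neg_loc : ∃ p q, ∀ i j, M i j = -1 → (i = p ∧ j = q) ∨ (i = q ∧ j = p)

lemma adjPair_apply {n : ℕ} (x y i j : Fin n) :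
    adjPair x y i j = if (i = x ∧ j = y) ∨ (i = y ∧ j = x) then 1 else 0 := rfl

lemma adjPair_row_sum {n : ℕ} {x y : Fin n} (h : x ≠ y) (i : Fin n) :
    ∑ j, adjPair x y i j = (if i = x then 1 else 0) + (if i = y then 1 else 0) := by
  have : ∀ j, adjPair x y i j =
      (if i = x then (if j = y then 1 else 0) else 0) +
      (if i = y then (if j = x then 1 else 0) else 0) := by
    intro j
    rw [adjPair_apply]
    grind
  simp only [this, Finset.sum_add_distrib]
  split_ifs <;> simp

lemma switch_row_sum {n : ℕ} (M : Matrix (Fin n) (Fin n) ℤ) {x y z w : Fin n}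
    (hxz : x ≠ z) (hzy : z ≠ y) (hyw : y ≠ w) (hwx : w ≠ x) (i : Fin n) :
    ∑ j, (M + adjPair x z - adjPair z y + adjPair y w - adjPair w x) i j = ∑ j, M i j := by
  simp only [Matrix.add_apply, Matrix.sub_apply, Finset.sum_add_distrib, Finset.sum_sub_distrib,
    adjPair_row_sum hxz, adjPair_row_sum hzy, adjPair_row_sum hyw, adjPair_row_sum hwx]
  ring

lemma exists_nonpos {n : ℕ} {o : Fin n} {M : Matrix (Fin n) (Fin n) ℤ} (h : Good o M) {b : Fin n}
    (hb : M o b = 2) : ∃ w, w ≠ o ∧ w ≠ b ∧ M b w ≤ 0 := by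
  by_contra! hc
  have hob : o ≠ b := by
    rintro rfl
    simp [h.diag] at hb
  have hle : ∑ j, ((1 : ℤ) + (if j = o then 1 else 0) - (if j = b then 1 else 0))
      ≤ ∑ j, M b j := by
    refine Finset.sum_le_sum fun j _ => ?_
    have h1 := h.symm o b
    have h2 := h.diag b
    have h3 := hc j
    grind
  have h4 := h.row_le b
  simp [Finset.sum_add_distrib, Finset.sum_sub_distrib] at hle
  omega

lemma exists_row_lt {n : ℕ} {o : Fin n} {M : Matrix (Fin n) (Fin n) ℤ} (h : Good o M) {b w : Fin n}
    (hb : M o b = 2) (hwo : w ≠ o) (hwb : w ≠ b) (hw : M b w ≤ 0) :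
    ∃ x, x ≠ o ∧ x ≠ b ∧ x ≠ w ∧ M o x < M w x := by
  by_contra! hc
  have hob : o ≠ b := by
    rintro rfl
    simp [h.diag] at hb
  have hle : ∑ j, M w j ≤ ∑ j, (M o j + (if j = o then M w o else 0)
      - (if j = w then M o w else 0) - (if j = b then 2 else 0)) := by
    refine Finset.sum_le_sum fun j _ => ?_
    have h1 := h.symm w b
    have h2 := h.diag w
    have h3 := h.diag o
    have h4 := hc j
    grind
  have h5 := h.row_min w
  have h6 := h.symm w o
  simp [Finset.sum_add_distrib, Finset.sum_sub_distrib] at hle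
  omega

/-- One switch removes a given double edge, hence two of the entries equal to `2`. -/
lemma good_step {n : ℕ} {o : Fin n} {M : Matrix (Fin n) (Fin n) ℤ} (h : Good o M) {b : Fin n}
    (hb : M o b = 2) : ∃ M', IsSwitchStep M M' ∧ Good o M' ∧
      (Finset.univ.filter fun p : Fin n × Fin n => M' p.1 p.2 = 2).card + 2 ≤
        (Finset.univ.filter fun p : Fin n × Fin n => M p.1 p.2 = 2).card := by
  have hob : o ≠ b := by
    rintro rfl
    simp [h.diag] at hb
  obtain ⟨w, hwo, hwb, hw⟩ := exists_nonpos h hb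
  obtain ⟨x, hxo, hxb, hxw, hx⟩ := exists_row_lt h hb hwo hwb hw
  have hwx : M w x = 1 ∨ (M w x = 0 ∧ M o x = -1) := by
    have h1 := h.entries w x
    have h2 := h.two_loc w x
    have h3 := h.entries o x
    grind
  have hox : M o x = 0 ∨ M o x = -1 := by
    have h3 := h.entries o x
    omega
  have hbw : M b w = 0 ∨ M b w = -1 := by
    have h3 := h.entries b w
    omega
  set M' := M + adjPair x o - adjPair o b + adjPair b w - adjPair w x with hM'
  -- The four switched pairs are distinct; each other entry is unchanged, and in particular it is
  -- none of the positions `ox`, `ob`.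
  have hcases : ∀ i j,
      (((i = x ∧ j = o) ∨ (i = o ∧ j = x)) ∧ M i j = M o x ∧ M' i j = M o x + 1) ∨
      (((i = o ∧ j = b) ∨ (i = b ∧ j = o)) ∧ M i j = 2 ∧ M' i j = 1) ∨
      (((i = b ∧ j = w) ∨ (i = w ∧ j = b)) ∧ M i j = M b w ∧ M' i j = M b w + 1) ∨
      (((i = w ∧ j = x) ∨ (i = x ∧ j = w)) ∧ M i j = M w x ∧ M' i j = M w x - 1) ∨
      (¬ ((i = x ∧ j = o) ∨ (i = o ∧ j = x)) ∧ ¬ ((i = o ∧ j = b) ∨ (i = b ∧ j = o)) ∧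
        M' i j = M i j) := by
    intro i j
    have e : M' i j = M i j + adjPair x o i j - adjPair o b i j + adjPair b w i j
      - adjPair w x i j := rfl
    simp only [adjPair_apply] at e
    have h1 := h.symm x o
    have h2 := h.symm b o
    have h3 := h.symm b w
    have h4 := h.symm w x
    clear_value M'
    by_cases c1 : (i = x ∧ j = o) ∨ (i = o ∧ j = x)
    · rw [if_pos c1, if_neg (by grind), if_neg (by grind), if_neg (by grind)] at e
      left
      grind
    by_cases c2 : (i = o ∧ j = b) ∨ (i = b ∧ j = o)
    · rw [if_neg c1, if_pos c2, if_neg (by grind), if_neg (by grind)] at e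
      right; left
      grind
    by_cases c3 : (i = b ∧ j = w) ∨ (i = w ∧ j = b)
    · rw [if_neg c1, if_neg c2, if_pos c3, if_neg (by grind)] at e
      right; right; left
      grind
    by_cases c4 : (i = w ∧ j = x) ∨ (i = x ∧ j = w)
    · rw [if_neg c1, if_neg c2, if_neg c3, if_pos c4] at e
      right; right; right; left
      grind
    rw [if_neg c1, if_neg c2, if_neg c3, if_neg c4] at e
    exact Or.inr (Or.inr (Or.inr (Or.inr ⟨c1, c2, by omega⟩)))
  have hsum : ∀ i, ∑ j, M' i j = ∑ j, M i j :=
    switch_row_sum M hxo hob hwb.symm hxw.symm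
  refine ⟨M', ⟨x, b, o, w, hxb, hxo, hxw, hob.symm, hwb.symm, hwo.symm, hM'⟩,
    ⟨?_, ?_, ?_, ?_, ?_, ?_, ?_⟩, ?_⟩
  · intro i j
    have h3 := h.symm i j
    simp only [hM', Matrix.add_apply, Matrix.sub_apply, adjPair_apply, h3, and_comm, or_comm]
  · intro i
    have h1 := hcases i i
    have h2 := h.diag i
    grind
  · intro i
    rw [hsum]
    exact h.row_le i
  · intro i
    rw [hsum, hsum]
    exact h.row_min i
  · intro i j
    have h1 := h.entries i j
    have h2 := hcases i j
    omega
  · intro i j hij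
    have h1 := h.two_loc i j
    have h2 := hcases i j
    have : M i j = 2 := by omega
    exact h1 this
  · obtain ⟨p, q, hpq⟩ := h.neg_loc
    rcases hwx with hwx | ⟨hwx, hox'⟩
    · refine ⟨p, q, fun i j hij => hpq i j ?_⟩
      have h2 := hcases i j
      omega
    · refine ⟨w, x, fun i j hij => ?_⟩
      have h1 := hpq o x hox'
      have h2 := hcases i j
      have h3 := hpq i j
      grind
  · have hsub : (Finset.univ.filter fun p : Fin n × Fin n => M' p.1 p.2 = 2) ∪ {(o, b), (b, o)} ⊆
        (Finset.univ.filter fun p : Fin n × Fin n => M p.1 p.2 = 2) := by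
      rintro ⟨i, j⟩ hij
      have h1 := hcases i j
      have h2 := h.symm o b
      simp only [Finset.mem_union, Finset.mem_filter, Finset.mem_univ, true_and,
        Finset.mem_insert, Finset.mem_singleton, Prod.mk.injEq] at hij ⊢
      rcases hij with hij | ⟨rfl, rfl⟩ | ⟨rfl, rfl⟩ <;> omega
    have hdisj : Disjoint (Finset.univ.filter fun p : Fin n × Fin n => M' p.1 p.2 = 2)
        {(o, b), (b, o)} := by
      rw [Finset.disjoint_left]
      rintro ⟨i, j⟩ hij hij'
      have h1 := hcases i j
      simp only [Finset.mem_filter, Finset.mem_univ, true_and,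
        Finset.mem_insert, Finset.mem_singleton, Prod.mk.injEq] at hij hij'
      omega
    have hcard := Finset.card_le_card hsub
    rw [Finset.card_union_of_disjoint hdisj, Finset.card_pair (by simp [hob])] at hcard
    exact hcard

/-- A good matrix either has no entry `2`, or one switch reduces their number by two. -/
lemma good_done_or_step {n : ℕ} {o : Fin n} {M : Matrix (Fin n) (Fin n) ℤ} (h : Good o M) :
    (∀ i j, M i j ≠ 2) ∨ ∃ M', IsSwitchStep M M' ∧ Good o M' ∧
      (Finset.univ.filter fun p : Fin n × Fin n => M' p.1 p.2 = 2).card + 2 ≤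
        (Finset.univ.filter fun p : Fin n × Fin n => M p.1 p.2 = 2).card := by
  by_cases hd : ∀ i j, M i j ≠ 2
  · exact Or.inl hd
  · push Not at hd
    obtain ⟨i, j, hij⟩ := hd
    right
    rcases h.two_loc i j hij with rfl | rfl
    · exact good_step h hij
    · exact good_step h (by rw [h.symm, hij])

lemma good_final {n : ℕ} {o : Fin n} {M : Matrix (Fin n) (Fin n) ℤ} (h : Good o M)
    (h2 : ∀ i j, M i j ≠ 2) :
    (∀ i j, M i j = 0 ∨ M i j = 1 ∨ M i j = -1) ∧
      (Finset.univ.filter fun p : Fin n × Fin n => M p.1 p.2 = -1).card ≤ 2 := by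
  refine ⟨fun i j => ?_, ?_⟩
  · have h1 := h.entries i j
    have h3 := h2 i j
    tauto
  · obtain ⟨p, q, hpq⟩ := h.neg_loc
    refine (Finset.card_le_card (t := {(p, q), (q, p)}) ?_).trans Finset.card_le_two
    rintro ⟨i, j⟩ hij
    simpa using hpq i j (by simpa using hij)

/-- Let `M` be a symmetric `n × n` integer matrix with zero diagonal,
all row and column sums in `[1, n−2]`, and first row sum minimal.  If all entries of `M`
are 0 or 1 except for at most two symmetric pairs of `+2` entries located in the first
row/column and at most one symmetric pair of `−1` entries anywhere, then at most 2
switches transform `M` into a matrix all of whose entries are 0 or 1 except for at most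
one symmetric pair of `−1` entries. -/
theorem stmt15 (n : ℕ) (hn : 0 < n) (M : Matrix (Fin n) (Fin n) ℤ)
    (hsymm : M.IsSymm)
    (hdiag : ∀ i, M i i = 0)
    (hrow : ∀ i, 1 ≤ ∑ j, M i j ∧ ∑ j, M i j ≤ (n : ℤ) - 2)
    (hcol : ∀ j, 1 ≤ ∑ i, M i j ∧ ∑ i, M i j ≤ (n : ℤ) - 2)
    (hmin : ∀ i, ∑ j, M ⟨0, hn⟩ j ≤ ∑ j, M i j)
    (hentries : ∀ i j, M i j = 0 ∨ M i j = 1 ∨ M i j = 2 ∨ M i j = -1)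
    (htwoloc : ∀ i j, M i j = 2 → i = ⟨0, hn⟩ ∨ j = ⟨0, hn⟩)
    (htwocard : (Finset.univ.filter fun p : Fin n × Fin n => M p.1 p.2 = 2).card ≤ 4)
    (hminuscard : (Finset.univ.filter fun p : Fin n × Fin n => M p.1 p.2 = -1).card ≤ 2) :
    ∃ M'' : Matrix (Fin n) (Fin n) ℤ,
      (M'' = M ∨ IsSwitchStep M M'' ∨ ∃ M₁, IsSwitchStep M M₁ ∧ IsSwitchStep M₁ M'') ∧
      (∀ i j, M'' i j = 0 ∨ M'' i j = 1 ∨ M'' i j = -1) ∧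
      (Finset.univ.filter fun p : Fin n × Fin n => M'' p.1 p.2 = -1).card ≤ 2 := by
  have hM : Good (⟨0, hn⟩ : Fin n) M := by
    refine ⟨fun i j => hsymm.apply j i, hdiag, fun i => (hrow i).2, hmin, hentries, htwoloc, ?_⟩
    by_cases hneg : ∃ p q, M p q = -1
    · obtain ⟨p, q, hpq⟩ := hneg
      have hne : p ≠ q := by
        rintro rfl
        simp [hdiag] at hpq
      have hsub : ({(p, q), (q, p)} : Finset (Fin n × Fin n)) ⊆
          (Finset.univ.filter fun p : Fin n × Fin n => M p.1 p.2 = -1) := by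
        rintro ⟨i, j⟩ hij
        have := hsymm.apply p q
        simp only [Finset.mem_filter, Finset.mem_univ, true_and,
          Finset.mem_insert, Finset.mem_singleton, Prod.mk.injEq] at hij ⊢
        rcases hij with ⟨rfl, rfl⟩ | ⟨rfl, rfl⟩ <;> omega
      have heq := Finset.eq_of_subset_of_card_le hsub
        (by rw [Finset.card_pair (by simp [hne])]; exact hminuscard)
      refine ⟨p, q, fun i j hij => ?_⟩
      have hmem : (i, j) ∈ ({(p, q), (q, p)} : Finset (Fin n × Fin n)) := by
        rw [heq]
        simpa using hij
      simpa using hmem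
    · push Not at hneg
      exact ⟨⟨0, hn⟩, ⟨0, hn⟩, fun i j hij => absurd hij (hneg i j)⟩
  rcases good_done_or_step hM with h0 | ⟨M₁, hs₁, hM₁, hc₁⟩
  · exact ⟨M, Or.inl rfl, good_final hM h0⟩
  rcases good_done_or_step hM₁ with h0 | ⟨M₂, hs₂, hM₂, hc₂⟩
  · exact ⟨M₁, Or.inr (Or.inl hs₁), good_final hM₁ h0⟩
  refine ⟨M₂, Or.inr (Or.inr ⟨M₁, hs₁, hs₂⟩), good_final hM₂ fun i j hij => ?_⟩
  have hpos : 0 < (Finset.univ.filter fun p : Fin n × Fin n => M₂ p.1 p.2 = 2).card :=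
    Finset.card_pos.mpr ⟨(i, j), by simpa using hij⟩
  omega
end

section
/- Let D be a graphic bipartite degree sequence on vertex classes U and V satisfying (Δ_U − δ_U)·(Δ_V − δ_V) ≤ 4·min( δ_U·(|U| − Δ_V), δ_V·(|V| − Δ_U) ). Let u₁ ∈ U and v₁ ∈ V, and let G be a bipartite graph with classes U and V realizing the degree sequence D + 𝟙_{u₁} + 𝟙_{v₁} (i.e. every vertex x has degree D(x), except u₁ and v₁ which have degree D(u₁)+1 and D(v₁)+1 respectively). Then there exists a bipartite graph G' with classes U and V realizing D such that |E(G) △ E(G')| ≤ 7. (Equivalently, there is an alternating path of length at most 7 in G between u₁ and v₁ whose first and last edges are edges of G; switching the edges and non-edges along this path transforms G into a realization of D.) -/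
/-!
Orient every edge of `G` from `U` to `V` and every non-edge from `V` to `U`. An alternating path
from `u₁` to `v₁` that starts and ends with edges is then a directed path, and switching along a
shortest one removes the surplus `𝟙_{u₁} + 𝟙_{v₁}` (`exists_switch`). So it suffices to find a
directed walk of length at most 7.

Suppose there is none. Let `X ⊆ U` be the vertices at distance at most 2 from `u₁`, `Y ⊆ V` those
from which `v₁` is at distance at most 2, `W = N(X)` and `Z = N(Y)`. Excluding walks of length at
most 5 gives that no edge joins `X` to `Y`, so `X ∩ Z = ∅` and `Y ∩ W = ∅`; excluding length 7
gives that `Z` is completely joined to `W`. Moreover `N(u₁) ⊆ W` is completely joined to the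
complement of `X`. Double counting the edges at `X`, with `δ_U` vertices of `N(u₁)` treated
separately, gives (`count_edges`)
`δ_U (|U| - Δ_V) < (Δ_V - |Z|) (|W| - δ_U)`, and symmetrically
`δ_V (|V| - Δ_U) < (Δ_U - |W|) (|Z| - δ_V)`.
Multiplying the two and applying the AM-GM inequality to `(Δ_V - |Z|) (|Z| - δ_V)` and
`(Δ_U - |W|) (|W| - δ_U)` contradicts the hypothesis.
-/

/-- Degree of `u ∈ U` in the bipartite graph with edge set `E ⊆ U × V`. -/
def bdegU {U V : Type*} [DecidableEq U] (E : Finset (U × V)) (u : U) : ℕ :=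
  (E.filter fun p => p.1 = u).card

/-- Degree of `v ∈ V` in the bipartite graph with edge set `E ⊆ U × V`. -/
def bdegV {U V : Type*} [DecidableEq V] (E : Finset (U × V)) (v : V) : ℕ :=
  (E.filter fun p => p.2 = v).card

/-! ### Switching along alternating walks -/

/-- `SwitchWalk E v₁ k u`: there is an alternating walk of length `2 * k + 1` from `u` to `v₁`
whose odd steps are edges of `E` and whose even steps are non-edges. Vertices may repeat. -/
def SwitchWalk {U V : Type*} (E : Finset (U × V)) (v₁ : V) : ℕ → U → Prop
  | 0, u => (u, v₁) ∈ E
  | k + 1, u => ∃ a b, (u, a) ∈ E ∧ (b, a) ∉ E ∧ SwitchWalk E v₁ k b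

lemma bdegU_insert {U V : Type*} [DecidableEq U] [DecidableEq V] {E : Finset (U × V)}
    {p : U × V} (hp : p ∉ E) (x : U) :
    bdegU (insert p E) x = bdegU E x + if x = p.1 then 1 else 0 := by
  unfold bdegU
  rw [Finset.filter_insert]
  by_cases h : x = p.1
  · subst h
    simp [hp]
  · simp [h, Ne.symm h]

lemma bdegV_insert {U V : Type*} [DecidableEq U] [DecidableEq V] {E : Finset (U × V)}
    {p : U × V} (hp : p ∉ E) (x : V) :
    bdegV (insert p E) x = bdegV E x + if x = p.2 then 1 else 0 := by
  unfold bdegV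
  rw [Finset.filter_insert]
  by_cases h : x = p.2
  · subst h
    simp [hp]
  · simp [h, Ne.symm h]

lemma bdegU_erase {U V : Type*} [DecidableEq U] [DecidableEq V] {E : Finset (U × V)}
    {p : U × V} (hp : p ∈ E) (x : U) :
    bdegU E x = bdegU (E.erase p) x + if x = p.1 then 1 else 0 := by
  rw [← bdegU_insert (Finset.notMem_erase p E), Finset.insert_erase hp]

lemma bdegV_erase {U V : Type*} [DecidableEq U] [DecidableEq V] {E : Finset (U × V)}
    {p : U × V} (hp : p ∈ E) (x : V) :
    bdegV E x = bdegV (E.erase p) x + if x = p.2 then 1 else 0 := by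
  rw [← bdegV_insert (Finset.notMem_erase p E), Finset.insert_erase hp]

/-- The tail of a shortest walk `u, a, b, …` survives the switch of its first two pairs: it meets
neither `u` nor, after its start, `b`. -/
lemma switchWalk_of_switch {U V : Type*} [DecidableEq U] [DecidableEq V] {E : Finset (U × V)}
    {v₁ : V} {u b : U} {a : V} {k : ℕ} (hu : ∀ i ≤ k, ¬ SwitchWalk E v₁ i u)
    (hb : ∀ i < k, ¬ SwitchWalk E v₁ i b) :
    ∀ j ≤ k, ∀ c, SwitchWalk E v₁ j c →
      SwitchWalk (insert (b, a) (E.erase (u, a))) v₁ j c := by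
  intro j
  induction j with
  | zero =>
    intro hj c hc
    have hcu : c ≠ u := by
      rintro rfl
      exact hu 0 hj hc
    have hc' : (c, v₁) ∈ E := hc
    show (c, v₁) ∈ insert (b, a) (E.erase (u, a))
    simp [hc', hcu]
  | succ j ih =>
    intro hj c hc
    have hcu : c ≠ u := by
      rintro rfl
      exact hu _ hj hc
    obtain ⟨a', d, h1, h2, h3⟩ := hc
    have hdb : d ≠ b := by
      rintro rfl
      exact hb j hj h3
    refine ⟨a', d, ?_, ?_, ih (by omega) d h3⟩
    · simp [h1, hcu]
    · simp [h2, hdb]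

/-- Switching along a shortest alternating walk removes the surplus degrees at its ends. -/
lemma exists_switch {U V : Type*} [DecidableEq U] [DecidableEq V]
    (dU : U → ℕ) (dV : V → ℕ) (v₁ : V) (k : ℕ) :
    ∀ (E : Finset (U × V)) (u : U),
      (∀ x, bdegU E x = dU x + if x = u then 1 else 0) →
      (∀ y, bdegV E y = dV y + if y = v₁ then 1 else 0) →
      SwitchWalk E v₁ k u →
      ∃ E' : Finset (U × V), (∀ x, bdegU E' x = dU x) ∧ (∀ y, bdegV E' y = dV y) ∧
        ((E \ E') ∪ (E' \ E)).card ≤ 2 * k + 1 := by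
  classical
  induction k using Nat.strong_induction_on with
  | _ k ih =>
  intro E u hU hV hk
  -- Minimality of the walk is not inherited by the switched graph, hence strong induction with a
  -- fresh shortest walk at each stage.
  have hex : ∃ j, SwitchWalk E v₁ j u := ⟨k, hk⟩
  have hle := Nat.find_min' hex hk
  have hmin := fun j (hj : j < Nat.find hex) => Nat.find_min hex hj
  have hspec := Nat.find_spec hex
  generalize Nat.find hex = m at hle hmin hspec
  cases m with
  | zero =>
    have hmem : (u, v₁) ∈ E := hspec
    refine ⟨E.erase (u, v₁), fun x => ?_, fun y => ?_, ?_⟩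
    · have h1 := hU x
      have h2 := bdegU_erase hmem x
      simp only at h2
      omega
    · have h1 := hV y
      have h2 := bdegV_erase hmem y
      simp only at h2
      omega
    · calc _ ≤ ({(u, v₁)} : Finset (U × V)).card := by
            apply Finset.card_le_card
            intro p hp
            simp only [Finset.mem_union, Finset.mem_sdiff, Finset.mem_erase] at hp
            rw [Finset.mem_singleton]
            tauto
        _ ≤ 2 * k + 1 := by simp
  | succ m =>
    obtain ⟨a, b, h1, h2, h3⟩ := hspec
    have hnot : (b, a) ∉ E.erase (u, a) := fun h => h2 (Finset.mem_of_mem_erase h)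
    have h3' := switchWalk_of_switch (E := E) (v₁ := v₁) (u := u) (b := b) (a := a) (k := m)
      (fun i hi => hmin i (by omega))
      (fun i hi hib => hmin (i + 1) (by omega) ⟨a, b, h1, h2, hib⟩) m le_rfl b h3
    obtain ⟨E', hE'U, hE'V, hcard⟩ := ih m (by omega) _ b
      (fun x => by
        have e1 := hU x
        have e2 := bdegU_erase h1 x
        have e3 := bdegU_insert hnot x
        simp only at e2 e3
        omega)
      (fun y => by
        have e1 := hV y
        have e2 := bdegV_erase h1 y
        have e3 := bdegV_insert hnot y
        simp only at e2 e3
        omega) h3'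
    refine ⟨E', hE'U, hE'V, ?_⟩
    set F := insert (b, a) (E.erase (u, a)) with hF
    calc _ ≤ (((F \ E') ∪ (E' \ F)) ∪ {(u, a), (b, a)}).card := by
          apply Finset.card_le_card
          intro p hp
          simp only [hF, Finset.mem_union, Finset.mem_sdiff, Finset.mem_erase,
            Finset.mem_insert, Finset.mem_singleton] at hp ⊢
          tauto
      _ ≤ _ := Finset.card_union_le _ _
      _ ≤ (2 * m + 1) + 2 := Nat.add_le_add hcard Finset.card_le_two
      _ ≤ 2 * k + 1 := by omega

/-! ### Double counting and the degree condition -/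

/-- Double counting of the edges between `X` and `W ⊇ N(X)`. Each vertex of `W` sends at most
`Δ - |Z|` edges to `X`; each of the `δ` vertices of `A` sends at most `Δ - |Xᶜ|`. -/
lemma count_edges {U V : Type*} [Fintype U] [Fintype V] [DecidableEq U] [DecidableEq V]
    (r : U → V → Prop) [∀ u v, Decidable (r u v)] (X Z : Finset U) (A W : Finset V)
    (u₁ : U) (hu₁ : u₁ ∈ X) (δ Δ : ℕ)
    (hδ : ∀ x ∈ X, δ ≤ (Finset.univ.filter fun v => r x v).card)
    (hδ₁ : δ < (Finset.univ.filter fun v => r u₁ v).card)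
    (hΔ : ∀ w ∈ W, (Finset.univ.filter fun u => r u w).card ≤ Δ)
    (hXW : ∀ x ∈ X, ∀ v, r x v → v ∈ W)
    (hXZ : Disjoint X Z) (hZW : ∀ z ∈ Z, ∀ w ∈ W, r z w)
    (hAW : A ⊆ W) (hA : A.card = δ) (hAX : ∀ a ∈ A, ∀ u ∉ X, r u a) :
    (δ : ℤ) * (Fintype.card U - Δ) < (Δ - Z.card) * (W.card - δ) := by
  -- Strict because the degree of `u₁` exceeds `δ`.
  have hlow : δ * X.card < ∑ x ∈ X, (W.filter fun v => r x v).card := by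
    have heq : ∀ x ∈ X, (W.filter fun v => r x v) = Finset.univ.filter fun v => r x v := by
      intro x hx
      ext v
      simpa using hXW x hx v
    rw [Finset.sum_congr rfl (fun x hx => congrArg Finset.card (heq x hx)), mul_comm,
      ← smul_eq_mul, ← Finset.sum_const]
    exact Finset.sum_lt_sum hδ ⟨u₁, hu₁, hδ₁⟩
  have hswap : ∑ x ∈ X, (W.filter fun v => r x v).card
      = ∑ w ∈ W, (X.filter fun u => r u w).card :=
    Finset.sum_card_bipartiteAbove_eq_sum_card_bipartiteBelow r
  have hdis : ∀ T : Finset U, Disjoint X T → ∀ w ∈ W, (∀ t ∈ T, r t w) →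
      (X.filter fun u => r u w).card + T.card ≤ Δ := by
    intro T hT w hw hr
    rw [← Finset.card_union_of_disjoint (hT.mono_left (Finset.filter_subset _ _))]
    refine (Finset.card_le_card ?_).trans (hΔ w hw)
    intro u hu
    simp only [Finset.mem_union, Finset.mem_filter, Finset.mem_univ, true_and] at hu ⊢
    rcases hu with h | h
    · exact h.2
    · exact hr u h
  have hsumA : ∑ w ∈ A, ((X.filter fun u => r u w).card : ℤ)
      ≤ A.card • ((Δ : ℤ) - (Fintype.card U - X.card)) := by
    apply Finset.sum_le_card_nsmul
    intro w hw
    have h := hdis Xᶜ disjoint_compl_right w (hAW hw)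
      (fun t ht => hAX w hw t (Finset.mem_compl.1 ht))
    have h' := Finset.card_add_card_compl X
    omega
  have hsumW : ∑ w ∈ W \ A, ((X.filter fun u => r u w).card : ℤ)
      ≤ (W \ A).card • ((Δ : ℤ) - Z.card) := by
    apply Finset.sum_le_card_nsmul
    intro w hw
    have hw' := (Finset.mem_sdiff.1 hw).1
    have h := hdis Z hXZ w hw' (fun t ht => hZW t ht w hw')
    omega
  have hcard := Finset.card_sdiff_add_card_eq_card hAW
  have hsplit := Finset.sum_sdiff (f := fun w => ((X.filter fun u => r u w).card : ℤ)) hAW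
  rw [hswap] at hlow
  zify at hlow hcard
  rw [← hsplit] at hlow
  simp only [nsmul_eq_mul] at hsumA hsumW
  rw [hA] at hsumA hcard
  have hc : ((W \ A).card : ℤ) = W.card - δ := by linarith
  rw [hc] at hsumW
  nlinarith

lemma bdegU_eq_card {U V : Type*} [Fintype V] [DecidableEq U] [DecidableEq V]
    (E : Finset (U × V)) (u : U) :
    bdegU E u = (Finset.univ.filter fun v => (u, v) ∈ E).card := by
  symm
  apply Finset.card_bij (fun v _ => (u, v))
  · simp
  · simp
  · rintro ⟨x, y⟩ h
    obtain ⟨h1, rfl⟩ : (x, y) ∈ E ∧ x = u := by simpa using h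
    exact ⟨y, by simpa using h1, rfl⟩

lemma bdegV_eq_card {U V : Type*} [Fintype U] [DecidableEq U] [DecidableEq V]
    (E : Finset (U × V)) (v : V) :
    bdegV E v = (Finset.univ.filter fun u => (u, v) ∈ E).card := by
  symm
  apply Finset.card_bij (fun u _ => (u, v))
  · simp
  · simp
  · rintro ⟨x, y⟩ h
    obtain ⟨h1, rfl⟩ : (x, y) ∈ E ∧ y = v := by simpa using h
    exact ⟨x, by simpa using h1, rfl⟩

/-- Expanding the product leaves `r * p + s * q`, which by AM-GM is at least
`2 √((p * s) * (r * q)) ≥ 2 * M`. -/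
lemma amgm_aux {p q r s M : ℤ} (hp : 0 ≤ p) (hq : 0 ≤ q) (hr : 0 ≤ r) (hs : 0 ≤ s) (hM : 0 ≤ M)
    (h1 : M < p * s) (h2 : M < r * q) : 4 * M < (r + s) * (p + q) := by
  have h3 : M * M ≤ (p * s) * (r * q) := mul_le_mul h1.le h2.le hM (by positivity)
  have h4 : (2 * M) ^ 2 ≤ (r * p + s * q) ^ 2 := by nlinarith [sq_nonneg (r * p - s * q)]
  have h5 : 2 * M ≤ r * p + s * q := abs_le_of_sq_le_sq' h4 (by positivity) |>.2
  nlinarith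

/-- Under the degree condition an alternating walk of length at most 7 exists. -/
lemma exists_short_walk {U V : Type*} [Fintype U] [Fintype V] [DecidableEq U] [DecidableEq V]
    (dU : U → ℕ) (dV : V → ℕ) (u₁ : U) (v₁ : V) (δU ΔU δV ΔV : ℕ)
    (hδU : ∀ u, δU ≤ dU u) (hΔU : ∀ u, dU u ≤ ΔU) (hδV : ∀ v, δV ≤ dV v) (hΔV : ∀ v, dV v ≤ ΔV)
    (hcU : ΔV ≤ Fintype.card U) (hcV : ΔU ≤ Fintype.card V)
    (hineq : (ΔU - δU) * (ΔV - δV) ≤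
      4 * min (δU * (Fintype.card U - ΔV)) (δV * (Fintype.card V - ΔU)))
    (G : Finset (U × V))
    (hGU : ∀ u, bdegU G u = dU u + if u = u₁ then 1 else 0)
    (hGV : ∀ v, bdegV G v = dV v + if v = v₁ then 1 else 0) :
    ∃ k ≤ 3, SwitchWalk G v₁ k u₁ := by
  classical
  by_contra! hno
  have n1 : (u₁, v₁) ∉ G := hno 0 (by norm_num)
  have n3 : ∀ a b, (u₁, a) ∈ G → (b, v₁) ∈ G → (b, a) ∈ G := by
    intro a b h1 h2
    by_contra h3
    exact hno 1 (by norm_num) ⟨a, b, h1, h3, h2⟩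
  have n5 : ∀ a u v b, (u₁, a) ∈ G → (u, a) ∉ G → (u, v) ∈ G → (b, v₁) ∈ G → (b, v) ∈ G := by
    intro a u v b h1 h2 h3 h4
    by_contra h5
    exact hno 2 (by norm_num) ⟨a, u, h1, h2, v, b, h3, h5, h4⟩
  have n7 : ∀ a u v u' v' b, (u₁, a) ∈ G → (u, a) ∉ G → (u, v) ∈ G → (u', v') ∈ G →
      (b, v') ∉ G → (b, v₁) ∈ G → (u', v) ∈ G := by
    intro a u v u' v' b h1 h2 h3 h4 h5 h6
    by_contra h7
    exact hno 3 (by norm_num) ⟨a, u, h1, h2, v, u', h3, h7, v', b, h4, h5, h6⟩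
  set X : Finset U := Finset.univ.filter fun u => u = u₁ ∨ ∃ a, (u₁, a) ∈ G ∧ (u, a) ∉ G with hX
  set Y : Finset V := Finset.univ.filter fun v => v = v₁ ∨ ∃ b, (b, v₁) ∈ G ∧ (b, v) ∉ G with hY
  set W : Finset V := Finset.univ.filter fun v => ∃ x ∈ X, (x, v) ∈ G with hW
  set Z : Finset U := Finset.univ.filter fun u => ∃ y ∈ Y, (u, y) ∈ G with hZ
  have mX : ∀ u, u ∈ X ↔ u = u₁ ∨ ∃ a, (u₁, a) ∈ G ∧ (u, a) ∉ G := by simp [hX]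
  have mY : ∀ v, v ∈ Y ↔ v = v₁ ∨ ∃ b, (b, v₁) ∈ G ∧ (b, v) ∉ G := by simp [hY]
  have mW : ∀ v, v ∈ W ↔ ∃ x ∈ X, (x, v) ∈ G := by simp [hW]
  have mZ : ∀ u, u ∈ Z ↔ ∃ y ∈ Y, (u, y) ∈ G := by simp [hZ]
  clear_value X Y W Z
  have hXY : ∀ x ∈ X, ∀ y ∈ Y, (x, y) ∉ G := by
    intro x hx y hy hxy
    rcases (mX x).1 hx with rfl | ⟨a, ha, hxa⟩ <;> rcases (mY y).1 hy with rfl | ⟨b, hb, hby⟩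
    · exact n1 hxy
    · exact hby (n3 y b hxy hb)
    · exact hxa (n3 a x ha hxy)
    · exact hby (n5 a x y b ha hxa hxy hb)
  have hZW : ∀ z ∈ Z, ∀ w ∈ W, (z, w) ∈ G := by
    intro z hz w hw
    obtain ⟨x, hx, hxw⟩ := (mW w).1 hw
    obtain ⟨y, hy, hzy⟩ := (mZ z).1 hz
    rcases (mX x).1 hx with rfl | ⟨a, ha, hxa⟩ <;> rcases (mY y).1 hy with rfl | ⟨b, hb, hby⟩
    · exact n3 w z hxw hzy
    · by_contra hzw
      exact hby (n5 w z y b hxw hzw hzy hb)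
    · exact n5 a x w z ha hxa hxw hzy
    · exact n7 a x w z y b ha hxa hxw hzy hby hb
  have hu₁X : u₁ ∈ X := (mX _).2 (Or.inl rfl)
  have hv₁Y : v₁ ∈ Y := (mY _).2 (Or.inl rfl)
  have hXZ : Disjoint X Z := by
    rw [Finset.disjoint_left]
    intro u hu hu'
    obtain ⟨y, hy, h⟩ := (mZ u).1 hu'
    exact hXY u hu y hy h
  have hYW : Disjoint Y W := by
    rw [Finset.disjoint_left]
    intro v hv hv'
    obtain ⟨x, hx, h⟩ := (mW v).1 hv'
    exact hXY x hx v hv h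
  have dGU : ∀ u, (Finset.univ.filter fun v => (u, v) ∈ G).card
      = dU u + if u = u₁ then 1 else 0 := fun u => by rw [← bdegU_eq_card, hGU]
  have dGV : ∀ v, (Finset.univ.filter fun u => (u, v) ∈ G).card
      = dV v + if v = v₁ then 1 else 0 := fun v => by rw [← bdegV_eq_card, hGV]
  have degU₁ : δU < (Finset.univ.filter fun v => (u₁, v) ∈ G).card := by
    rw [dGU, if_pos rfl]
    exact Nat.lt_succ_of_le (hδU u₁)
  have degV₁ : δV < (Finset.univ.filter fun u => (u, v₁) ∈ G).card := by
    rw [dGV, if_pos rfl]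
    exact Nat.lt_succ_of_le (hδV v₁)
  have hNW : (Finset.univ.filter fun v => (u₁, v) ∈ G) ⊆ W := fun v hv =>
    (mW v).2 ⟨u₁, hu₁X, by simpa using hv⟩
  have hNZ : (Finset.univ.filter fun u => (u, v₁) ∈ G) ⊆ Z := fun u hu =>
    (mZ u).2 ⟨v₁, hv₁Y, by simpa using hu⟩
  obtain ⟨A, hAsub, hA⟩ := Finset.exists_subset_card_eq degU₁.le
  obtain ⟨B, hBsub, hB⟩ := Finset.exists_subset_card_eq degV₁.le
  have key1 := count_edges (fun u v => (u, v) ∈ G) X Z A W u₁ hu₁X δU ΔV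
    (fun x _ => by rw [dGU]; exact (hδU x).trans (Nat.le_add_right _ _)) degU₁
    (fun w hw => by
      have : w ≠ v₁ := fun h => Finset.disjoint_left.1 hYW hv₁Y (h ▸ hw)
      rw [dGV, if_neg this]
      exact hΔV w)
    (fun x hx v h => (mW v).2 ⟨x, hx, h⟩) hXZ hZW (hAsub.trans hNW) hA
    (fun a ha u hu => by
      by_contra h
      exact hu ((mX u).2 (Or.inr ⟨a, by simpa using hAsub ha, h⟩)))
  have key2 := count_edges (fun v u => (u, v) ∈ G) Y W B Z v₁ hv₁Y δV ΔU
    (fun y _ => by rw [dGV]; exact (hδV y).trans (Nat.le_add_right _ _)) degV₁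
    (fun z hz => by
      have : z ≠ u₁ := fun h => Finset.disjoint_left.1 hXZ hu₁X (h ▸ hz)
      rw [dGU, if_neg this]
      exact hΔU z)
    (fun y hy u h => (mZ u).2 ⟨y, hy, h⟩) hYW (fun w hw z hz => hZW z hz w hw)
    (hBsub.trans hNZ) hB
    (fun b hb v hv => by
      by_contra h
      exact hv ((mY v).2 (Or.inr ⟨b, by simpa using hBsub hb, h⟩)))
  have hWc : δU < W.card := degU₁.trans_le (Finset.card_le_card hNW)
  have hZc : δV < Z.card := degV₁.trans_le (Finset.card_le_card hNZ)
  have hΔδU : δU ≤ ΔU := (hδU u₁).trans (hΔU u₁)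
  have hΔδV : δV ≤ ΔV := (hδV v₁).trans (hΔV v₁)
  zify [hΔδU, hΔδV, hcU, hcV] at hineq hWc hZc
  have hP : (0 : ℤ) ≤ δU * (Fintype.card U - ΔV) :=
    mul_nonneg (by positivity) (sub_nonneg.2 (by exact_mod_cast hcU))
  have hQ : (0 : ℤ) ≤ δV * (Fintype.card V - ΔU) :=
    mul_nonneg (by positivity) (sub_nonneg.2 (by exact_mod_cast hcV))
  have hp : (0 : ℤ) < ΔV - Z.card := pos_of_mul_pos_left (hP.trans_lt key1) (by linarith)
  have hr : (0 : ℤ) < ΔU - W.card := pos_of_mul_pos_left (hQ.trans_lt key2) (by linarith)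
  have := amgm_aux hp.le (by linarith) hr.le (by linarith) (le_min hP hQ)
    ((min_le_left _ _).trans_lt key1) ((min_le_right _ _).trans_lt key2)
  -- `amgm_aux` is applied with `p = Δ_V - |Z|`, `q = |Z| - δ_V`, `r = Δ_U - |W|`, `s = |W| - δ_U`.
  have e1 : (ΔU - W.card + (W.card - δU) : ℤ) = ΔU - δU := by ring
  have e2 : (ΔV - Z.card + (Z.card - δV) : ℤ) = ΔV - δV := by ring
  rw [e1, e2] at this
  linarith

/-- Let `D = (dU, dV)` be a graphic bipartite degree sequence on vertex
classes `U`, `V` (witnessed by the realization `G₀`) satisfying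
`(Δ_U − δ_U)·(Δ_V − δ_V) ≤ 4·min(δ_U·(|U| − Δ_V), δ_V·(|V| − Δ_U))`.
If `G` is a bipartite graph realizing `D + 𝟙_{u₁} + 𝟙_{v₁}`, then there is a bipartite
graph `G'` realizing `D` with `|E(G) △ E(G')| ≤ 7`. -/
theorem stmt16 {U V : Type*} [Fintype U] [Fintype V] [DecidableEq U] [DecidableEq V]
    (dU : U → ℕ) (dV : V → ℕ) (u₁ : U) (v₁ : V)
    (hineq :
      (sSup (Set.range dU) - sInf (Set.range dU)) *
          (sSup (Set.range dV) - sInf (Set.range dV)) ≤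
        4 * min (sInf (Set.range dU) * (Fintype.card U - sSup (Set.range dV)))
            (sInf (Set.range dV) * (Fintype.card V - sSup (Set.range dU))))
    (G₀ : Finset (U × V))
    (hG₀U : ∀ u, bdegU G₀ u = dU u) (hG₀V : ∀ v, bdegV G₀ v = dV v)
    (G : Finset (U × V))
    (hGU : ∀ u, bdegU G u = dU u + if u = u₁ then 1 else 0)
    (hGV : ∀ v, bdegV G v = dV v + if v = v₁ then 1 else 0) :
    ∃ G' : Finset (U × V),
      (∀ u, bdegU G' u = dU u) ∧ (∀ v, bdegV G' v = dV v) ∧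
      ((G \ G') ∪ (G' \ G)).card ≤ 7 := by
  have hbU : BddAbove (Set.range dU) := (Set.finite_range dU).bddAbove
  have hbV : BddAbove (Set.range dV) := (Set.finite_range dV).bddAbove
  -- The realization `G₀` guarantees `Δ_V ≤ |U|` and `Δ_U ≤ |V|`, so that the natural-number
  -- subtractions in `hineq` do not truncate.
  obtain ⟨k, hk, hwalk⟩ := exists_short_walk dU dV u₁ v₁ _ _ _ _
    (fun u => Nat.sInf_le (Set.mem_range_self u)) (fun u => le_csSup hbU (Set.mem_range_self u))
    (fun v => Nat.sInf_le (Set.mem_range_self v)) (fun v => le_csSup hbV (Set.mem_range_self v))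
    (csSup_le ⟨_, Set.mem_range_self v₁⟩ (by
      rintro _ ⟨v, rfl⟩
      rw [← hG₀V, bdegV_eq_card]
      exact Finset.card_le_univ _))
    (csSup_le ⟨_, Set.mem_range_self u₁⟩ (by
      rintro _ ⟨u, rfl⟩
      rw [← hG₀U, bdegU_eq_card]
      exact Finset.card_le_univ _))
    hineq G hGU hGV
  obtain ⟨G', h1, h2, h3⟩ := exists_switch dU dV v₁ k G u₁ hGU hGV hwalk
  exact ⟨G', h1, h2, h3.trans (by omega)⟩
end

section
/- Let n ≥ 100 and let p satisfy 5·(log n)/(n−1) ≤ p ≤ 1 − 5·(log n)/(n−1). Let G(n,p) be the Erdős–Rényi random graph on n labelled vertices, in which each of the C(n,2) possible edges is present independently with probability p. Then the probability that the degree sequence of G(n,p) belongs to 𝒟_{JMS+} is at least 1 − 3/n. -/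
/-!
Let `N = n - 1`, let `μ` be the average degree of the graph, and write `a = μ - δ`, `b = Δ - μ`.
Dividing the inequality defining `DJMSplus` by `n` and expanding turns it into
`a b (1 + 2 (a + b)) ≤ a² (N - μ) + b² μ` (`djms_of_spread`).

This inequality is stable under complementation (swap `a` with `b` and `μ` with `N - μ`), so one may
take `μ ≤ N / 2`. If `a, b ≤ T` then (`spread_half`)
* when `b ≤ a`, it follows from `1 + 4 T ≤ N`;
* when `a ≤ b`, it follows from the non-positivity of the discriminant of a quadratic form, i.e. from
  `(1 + 2 T)² ≤ 4 μ₀ (N - μ₀ - 2 T)` for some lower bound `μ₀ ≤ μ`.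

Hoeffding's inequality (`hoeffding_edges`) gives, with `L = log n`:
* all degrees are within `t = √(N L)` of `p N`, except with probability `n · 2 n⁻² = 2 / n`;
* the average degree is within `s = √(log (2 n))` of `p N`, except with probability `1 / n`.

On the good event one takes `T = t + s` and `μ₀ = 9 L / 2`; the required numerical inequalities
hold for all `n ≥ 100` because `L ≤ 0.0466 N` there (`numerics`).
-/

open MeasureTheory
open scoped ENNReal

/-- The Bernoulli measure with parameter `p` on `Bool` (`true` = the edge is present). -/
noncomputable def bern (p : ℝ) : Measure Bool :=
  ENNReal.ofReal p • Measure.dirac true + ENNReal.ofReal (1 - p) • Measure.dirac false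

/-- The set of unordered pairs of distinct vertices of `[n]` (potential edges). -/
def EdgeIdx (n : ℕ) : Type := {e : Sym2 (Fin n) // ¬ e.IsDiag}

instance (n : ℕ) : Fintype (EdgeIdx n) := by unfold EdgeIdx; infer_instance

instance (n : ℕ) : MeasurableSpace (EdgeIdx n → Bool) := by infer_instance

/-- The degree of the vertex `v` in the graph described by the edge indicator `ω`. -/
def ERdeg (n : ℕ) (ω : EdgeIdx n → Bool) (v : Fin n) : ℕ :=
  (Finset.univ.filter fun e : EdgeIdx n => v ∈ e.1 ∧ ω e = true).card

/-- The family `𝒟_{JMS+}`: writing `Δ = max d`, `δ = min d`, and `2m = ∑_v d(v)`, a degree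
sequence `d` belongs to `𝒟_{JMS+}` iff
`(2m − nδ)(nΔ − 2m) ≤ (Δ − δ)((2m − nδ)(n − Δ − 1) + (nΔ − 2m)δ)`. -/
def DJMSplus (n : ℕ) (d : Fin n → ℕ) : Prop :=
  let Δ : ℤ := (sSup (Set.range d) : ℕ)
  let δ : ℤ := (sInf (Set.range d) : ℕ)
  let m2 : ℤ := ∑ v, (d v : ℤ)
  (m2 - n * δ) * (n * Δ - m2) ≤
    (Δ - δ) * ((m2 - n * δ) * (n - Δ - 1) + (n * Δ - m2) * δ)

/-! ### The deterministic inequality -/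

/-- The sparse half `μ ≤ N / 2` of the inequality for the deviations `a`, `b` of the extreme
degrees from the average degree `μ`. -/
lemma spread_half {N μ a b T μ₀ : ℝ} (ha : 0 ≤ a) (hb : 0 ≤ b) (haT : a ≤ T) (hbT : b ≤ T)
    (hμ : μ₀ ≤ μ) (hμ₀ : 0 < μ₀) (hμN : μ ≤ N / 2) (hA : 1 + 4 * T ≤ N)
    (hB : (1 + 2 * T) ^ 2 ≤ 4 * μ₀ * (N - μ₀ - 2 * T)) :
    a * b * (1 + 2 * (a + b)) ≤ a ^ 2 * (N - μ) + b ^ 2 * μ := by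
  rcases le_total a b with hab | hab
  · have h1 : a * b * (1 + 2 * (a + b)) ≤ (1 + 2 * T) * (a * b) + 2 * T * a ^ 2 := by
      have : 0 ≤ 2 * a * (a + b) * (T - b) := by
        have := sub_nonneg.2 hbT; positivity
      nlinarith
    have h2 : 0 ≤ (μ - μ₀) * (b ^ 2 - a ^ 2) :=
      mul_nonneg (by linarith) (by nlinarith)
    -- completing the square; the discriminant is controlled by `hB`
    have h3 : 0 ≤ 4 * μ₀ * (a ^ 2 * (N - μ₀ - 2 * T) - (1 + 2 * T) * (a * b) + b ^ 2 * μ₀) := by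
      have := mul_le_mul_of_nonneg_left hB (sq_nonneg a)
      nlinarith [sq_nonneg (2 * μ₀ * b - (1 + 2 * T) * a)]
    have h4 := nonneg_of_mul_nonneg_right h3 (by positivity)
    nlinarith
  · have h1 : a * b * (1 + 2 * (a + b)) ≤ (1 + 2 * T) * (a * b) + 2 * T * b ^ 2 := by
      have : 0 ≤ 2 * b * (a + b) * (T - a) := by
        have := sub_nonneg.2 haT; positivity
      nlinarith
    have hT : 0 ≤ T := ha.trans haT
    have h2 : 0 ≤ 2 * T * (b * (a - b)) :=
      mul_nonneg (by positivity) (mul_nonneg hb (by linarith))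
    have h3 : 0 ≤ (N - (1 + 4 * T)) * (a * b) := mul_nonneg (by linarith) (by positivity)
    have h4 : 0 ≤ (N / 2 - μ) * (a ^ 2 - b ^ 2) := mul_nonneg (by linarith) (by nlinarith)
    have h5 : 0 ≤ N * (a - b) ^ 2 := mul_nonneg (by linarith) (sq_nonneg _)
    nlinarith

lemma spread {N μ a b T μ₀ : ℝ} (ha : 0 ≤ a) (hb : 0 ≤ b) (haT : a ≤ T) (hbT : b ≤ T)
    (hμ : μ₀ ≤ μ) (hμ' : μ₀ ≤ N - μ) (hμ₀ : 0 < μ₀) (hA : 1 + 4 * T ≤ N)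
    (hB : (1 + 2 * T) ^ 2 ≤ 4 * μ₀ * (N - μ₀ - 2 * T)) :
    a * b * (1 + 2 * (a + b)) ≤ a ^ 2 * (N - μ) + b ^ 2 * μ := by
  rcases le_total μ (N / 2) with h | h
  · exact spread_half ha hb haT hbT hμ hμ₀ h hA hB
  · have := spread_half (μ := N - μ) hb ha hbT haT hμ' hμ₀ (by linarith) hA hB
    linarith

/-- A degree sequence whose average is at least `μ₀` away from `0` and `n - 1`, and all of whose
entries are within `T` of the average, lies in the family. -/
lemma djms_of_spread {n : ℕ} (hn : 0 < n) (d : Fin n → ℕ) {μ T μ₀ : ℝ}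
    (hsum : ∑ v, (d v : ℝ) = n * μ) (hd : ∀ v, |(d v : ℝ) - μ| ≤ T)
    (hμ : μ₀ ≤ μ) (hμ' : μ₀ ≤ (n : ℝ) - 1 - μ) (hμ₀ : 0 < μ₀) (hA : 1 + 4 * T ≤ (n : ℝ) - 1)
    (hB : (1 + 2 * T) ^ 2 ≤ 4 * μ₀ * ((n : ℝ) - 1 - μ₀ - 2 * T)) :
    DJMSplus n d := by
  have hn' : (0 : ℝ) < n := by exact_mod_cast hn
  have : Nonempty (Fin n) := ⟨⟨0, hn⟩⟩
  have hbdd : BddAbove (Set.range d) := (Set.finite_range d).bddAbove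
  obtain ⟨u, hu⟩ := Nat.sSup_mem (Set.range_nonempty d) hbdd
  obtain ⟨w, hw⟩ := Nat.sInf_mem (Set.range_nonempty d)
  have hmax : ∀ v, d v ≤ d u := fun v => hu ▸ le_csSup hbdd ⟨v, rfl⟩
  have hmin : ∀ v, d w ≤ d v := fun v => hw ▸ Nat.sInf_le ⟨v, rfl⟩
  unfold DJMSplus
  rw [← hu, ← hw]
  dsimp only
  have hle : μ ≤ d u := by
    have : ∑ v, (d v : ℝ) ≤ ∑ _v : Fin n, (d u : ℝ) :=
      Finset.sum_le_sum fun v _ => by exact_mod_cast hmax v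
    rw [hsum] at this
    simp only [Finset.sum_const, Finset.card_univ, Fintype.card_fin, nsmul_eq_mul] at this
    exact le_of_mul_le_mul_left this hn'
  have hge : (d w : ℝ) ≤ μ := by
    have : ∑ _v : Fin n, (d w : ℝ) ≤ ∑ v, (d v : ℝ) :=
      Finset.sum_le_sum fun v _ => by exact_mod_cast hmin v
    rw [hsum] at this
    simp only [Finset.sum_const, Finset.card_univ, Fintype.card_fin, nsmul_eq_mul] at this
    exact le_of_mul_le_mul_left this hn'
  have key := spread (a := μ - d w) (b := d u - μ) (by linarith) (by linarith)
    (by have := (abs_le.1 (hd w)).1; linarith) (by have := (abs_le.1 (hd u)).2; linarith)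
    hμ hμ' hμ₀ hA hB
  have key' := mul_le_mul_of_nonneg_left key hn'.le
  have goal : (n * μ - n * (d w : ℝ)) * (n * d u - n * μ) ≤
      ((d u : ℝ) - d w) * ((n * μ - n * d w) * (n - d u - 1) + (n * d u - n * μ) * d w) := by
    nlinarith
  rw [← hsum] at goal
  exact_mod_cast goal

/-! ### Numerical estimates -/

lemma log_bounds {n : ℕ} (hn : 100 ≤ n) :
    4.605 ≤ Real.log n ∧ Real.log n ≤ 0.0466 * ((n : ℝ) - 1) := by
  have hn' : (100 : ℝ) ≤ n := by exact_mod_cast hn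
  have h100 : Real.log 100 = 2 * Real.log 2 + 2 * Real.log 5 := by
    rw [show (100 : ℝ) = 10 ^ 2 by norm_num, Real.log_pow, Real.log_ten_eq]
    push_cast; ring
  have h2 := Real.log_two_gt_d9
  have h2' := Real.log_two_lt_d9
  have h5 := Real.log_five_gt_d9
  have h5' := Real.log_five_lt_d9
  constructor
  · have := Real.log_le_log (by norm_num) hn'
    linarith
  · -- the tangent line of the logarithm at `100`
    have h := Real.log_le_sub_one_of_pos (x := (n : ℝ) / 100) (by positivity)
    rw [Real.log_div (by positivity) (by norm_num)] at h
    linarith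

lemma numerics {N L t s : ℝ} (hN : 99 ≤ N) (hL : 4.605 ≤ L) (hLN : L ≤ 0.0466 * N)
    (ht : 0 ≤ t) (hs : 0 ≤ s) (ht2 : t ^ 2 = N * L) (hs2 : s ^ 2 = L + Real.log 2) :
    s ≤ L / 2 ∧ 1 + 4 * (t + s) ≤ N ∧
      (1 + 2 * (t + s)) ^ 2 ≤ 4 * (9 / 2 * L) * (N - 9 / 2 * L - 2 * (t + s)) := by
  have hlog := Real.log_two_lt_d9
  have hs3 : s ^ 2 ≤ 1.1506 * L := by linarith
  have h1 : s ≤ L / 2 := abs_le_of_sq_le_sq' (by nlinarith) (by linarith) |>.2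
  have h2 : s ≤ 0.108 * t := abs_le_of_sq_le_sq' (by nlinarith) (by linarith) |>.2
  have h3 : 1 ≤ 0.0469 * t := abs_le_of_sq_le_sq' (by nlinarith) (by linarith) |>.2
  have h4 : t ≤ 0.2159 * N := abs_le_of_sq_le_sq' (by nlinarith) (by linarith) |>.2
  refine ⟨h1, by linarith, ?_⟩
  have h5 : (1 + 2 * (t + s)) ^ 2 ≤ (2.2629 * t) ^ 2 :=
    pow_le_pow_left₀ (by linarith) (by linarith) 2
  have h6 : 0.3118 * N ≤ N - 9 / 2 * L - 2 * (t + s) := by linarith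
  have h7 := mul_le_mul_of_nonneg_left h6 (show 0 ≤ 4 * (9 / 2 * L) by linarith)
  have h8 : 0 ≤ N * L := by nlinarith
  nlinarith

/-! ### Counting edges -/

/-- The edge indicator as a real number. -/
def ind {n : ℕ} (ω : EdgeIdx n → Bool) (e : EdgeIdx n) : ℝ := if ω e then 1 else 0

/-- The potential edges containing the vertex `v`. -/
def vertexEdges (n : ℕ) (v : Fin n) : Finset (EdgeIdx n) := Finset.univ.filter fun e => v ∈ e.1

lemma card_vertexEdges (n : ℕ) (v : Fin n) : (vertexEdges n v).card = n - 1 := by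
  have : (Finset.univ.erase v).card = (vertexEdges n v).card := by
    refine Finset.card_bij
      (fun w hw => (⟨s(v, w), by
        rw [Sym2.mk_isDiag_iff]; exact (Finset.ne_of_mem_erase hw).symm⟩ : EdgeIdx n)) ?_ ?_ ?_
    · intro w hw
      exact Finset.mem_filter.2 ⟨Finset.mem_univ _, Sym2.mem_mk_left v w⟩
    · intro w hw w' hw' h
      have h' : s(v, w) = s(v, w') := congrArg Subtype.val h
      exact Sym2.congr_right.1 h'
    · intro e he
      have hv : v ∈ e.1 := by simpa [vertexEdges] using he
      obtain ⟨w, hw⟩ := Sym2.mem_iff_exists.1 hv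
      refine ⟨w, ?_, Subtype.ext hw.symm⟩
      have := e.2
      rw [hw, Sym2.mk_isDiag_iff] at this
      simpa using fun h => this h.symm
  rw [← this]
  simp

lemma card_edges (n : ℕ) : ((Finset.univ : Finset (EdgeIdx n)).card : ℝ) = n * (n - 1) / 2 := by
  have h : Fintype.card (EdgeIdx n) = n.choose 2 := by
    have := Sym2.card_subtype_not_diag (α := Fin n)
    rw [Fintype.card_fin] at this
    rw [← this]
    exact Fintype.card_congr (Equiv.refl _)
  rw [Finset.card_univ, h, Nat.cast_choose_two]

lemma ERdeg_eq {n : ℕ} (ω : EdgeIdx n → Bool) (v : Fin n) :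
    (ERdeg n ω v : ℝ) = ∑ e ∈ vertexEdges n v, ind ω e := by
  unfold ERdeg vertexEdges ind
  rw [← Finset.filter_filter, Finset.card_filter]
  push_cast
  rfl

/-- The handshake lemma. -/
lemma sum_ERdeg {n : ℕ} (ω : EdgeIdx n → Bool) :
    ∑ v, (ERdeg n ω v : ℝ) = 2 * ∑ e, ind ω e := by
  simp_rw [ERdeg_eq, vertexEdges, Finset.sum_filter]
  rw [Finset.sum_comm, Finset.mul_sum]
  refine Finset.sum_congr rfl fun e _ => ?_
  rw [← Finset.sum_filter, Finset.sum_const, nsmul_eq_mul]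
  congr 1
  have h := Sym2.card_toFinset_of_not_isDiag e.1 e.2
  have h' : (Finset.univ.filter fun v => v ∈ e.1) = e.1.toFinset := by
    ext v; simp
  rw [h', h]
  norm_num

/-! ### Concentration -/

lemma bern_prob {p : ℝ} (h0 : 0 ≤ p) (h1 : p ≤ 1) : IsProbabilityMeasure (bern p) := by
  constructor
  simp only [bern, Measure.add_apply, Measure.smul_apply, measure_univ, smul_eq_mul, mul_one]
  rw [← ENNReal.ofReal_add h0 (by linarith)]
  simp

lemma bern_mean {p : ℝ} (h0 : 0 ≤ p) (h1 : p ≤ 1) :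
    ∫ b : Bool, (if b then (1 : ℝ) else 0) ∂(bern p) = p := by
  have := bern_prob h0 h1
  rw [integral_fintype Integrable.of_finite]
  simp [bern, Measure.real, h0]

/-- The Erdős–Rényi measure on edge indicators. -/
noncomputable abbrev ER (n : ℕ) (p : ℝ) : Measure (EdgeIdx n → Bool) :=
  Measure.pi (fun _ : EdgeIdx n => bern p)

open ProbabilityTheory in
/-- Two-sided Hoeffding inequality for the number of edges present in a set of potential edges. -/
lemma hoeffding_edges {n : ℕ} {p : ℝ} (h0 : 0 ≤ p) (h1 : p ≤ 1) (S : Finset (EdgeIdx n))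
    {ε : ℝ} (hε : 0 ≤ ε) :
    (ER n p).real {ω | ε ≤ |∑ e ∈ S, ind ω e - S.card * p|} ≤
      2 * Real.exp (-2 * ε ^ 2 / S.card) := by
  have := bern_prob h0 h1
  have hmeas : Measurable (fun b : Bool => (if b then (1 : ℝ) else 0) - p) := measurable_of_finite _
  have hindep : iIndepFun (fun (e : EdgeIdx n) (ω : EdgeIdx n → Bool) => ind ω e - p) (ER n p) :=
    iIndepFun_pi (X := fun (_ : EdgeIdx n) (b : Bool) => (if b then (1 : ℝ) else 0) - p)
      (fun _ => hmeas.aemeasurable)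
  have hindep' : iIndepFun (fun (e : EdgeIdx n) (ω : EdgeIdx n → Bool) => -(ind ω e - p))
      (ER n p) :=
    iIndepFun_pi (X := fun (_ : EdgeIdx n) (b : Bool) => -((if b then (1 : ℝ) else 0) - p))
      (fun _ => hmeas.neg.aemeasurable)
  have hsub : ∀ e : EdgeIdx n,
      HasSubgaussianMGF (fun ω => ind ω e - p) ((‖(1 : ℝ) - 0‖₊ / 2) ^ 2) (ER n p) := by
    intro e
    have hm : Measurable (fun ω : EdgeIdx n → Bool => ind ω e) :=
      (measurable_of_finite (fun b : Bool => if b then (1 : ℝ) else 0)).comp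
        (measurable_pi_apply e)
    have hmean : ∫ ω, ind ω e ∂(ER n p) = p := by
      refine Eq.trans ?_ (bern_mean h0 h1)
      exact integral_comp_eval (μ := fun _ : EdgeIdx n => bern p) (i := e)
        (f := fun b : Bool => if b then (1 : ℝ) else 0)
        (measurable_of_finite _).aestronglyMeasurable
    have := hasSubgaussianMGF_of_mem_Icc (μ := ER n p) (a := 0) (b := 1) hm.aemeasurable
      (Filter.Eventually.of_forall fun ω => by unfold ind; split_ifs <;> simp)
    rwa [hmean] at this
  have hc : ∀ r : ℝ, -r ^ 2 / (2 * ((∑ _e ∈ S, (‖(1 : ℝ) - 0‖₊ / 2) ^ 2 : NNReal) : ℝ)) =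
      -2 * r ^ 2 / S.card := by
    intro r
    rcases eq_or_ne (S.card : ℝ) 0 with h | h
    · simp [h]
    · simp
      field_simp
  have hup := HasSubgaussianMGF.measure_sum_ge_le_of_iIndepFun hindep
    (s := S) (fun e _ => hsub e) hε
  have hlo := HasSubgaussianMGF.measure_sum_ge_le_of_iIndepFun hindep'
    (s := S) (fun e _ => (hsub e).neg) hε
  rw [hc] at hup hlo
  calc _ ≤ (ER n p).real ({ω | ε ≤ ∑ e ∈ S, (ind ω e - p)} ∪
        {ω | ε ≤ ∑ e ∈ S, -(ind ω e - p)}) := by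
        refine measureReal_mono fun ω hω => ?_
        simp only [Set.mem_ofPred_eq, Set.mem_union, Finset.sum_neg_distrib, Finset.sum_sub_distrib,
          Finset.sum_const, nsmul_eq_mul] at hω ⊢
        exact le_abs.1 hω
    _ ≤ _ := measureReal_union_le _ _
    _ ≤ _ := by linarith

/-- The event that some degree, or the average degree, is far from its expectation. -/
def badSet (n : ℕ) (p t s : ℝ) : Set (EdgeIdx n → Bool) :=
  (⋃ v : Fin n, {ω | t ≤ |∑ e ∈ vertexEdges n v, ind ω e - (vertexEdges n v).card * p|}) ∪
    {ω | s * n / 2 ≤ |∑ e, ind ω e - (Finset.univ : Finset (EdgeIdx n)).card * p|}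

lemma bad_le {n : ℕ} (hn : 100 ≤ n) {p t s : ℝ} (h0 : 0 ≤ p) (h1 : p ≤ 1) (ht : 0 ≤ t)
    (hs : 0 ≤ s) (ht2 : t ^ 2 = ((n : ℝ) - 1) * Real.log n)
    (hs2 : s ^ 2 = Real.log n + Real.log 2) :
    (ER n p).real (badSet n p t s) ≤ 3 / n := by
  have := bern_prob h0 h1
  have hn' : (100 : ℝ) ≤ n := by exact_mod_cast hn
  have hN : (0 : ℝ) < (n : ℝ) - 1 := by linarith
  have hn0 : (0 : ℝ) < n := by linarith
  have hdeg : ∀ v : Fin n,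
      (ER n p).real {ω | t ≤ |∑ e ∈ vertexEdges n v, ind ω e - (vertexEdges n v).card * p|} ≤
        2 * ((n : ℝ) ^ 2)⁻¹ := by
    intro v
    refine (hoeffding_edges h0 h1 (vertexEdges n v) ht).trans (le_of_eq ?_)
    rw [card_vertexEdges, Nat.cast_sub (by omega), Nat.cast_one, ht2,
      show -2 * (((n : ℝ) - 1) * Real.log n) / ((n : ℝ) - 1) = -(2 * Real.log n) by
        field_simp, Real.exp_neg, mul_comm 2 (Real.log n), Real.exp_mul, Real.exp_log hn0]
    norm_num
  have havg : (ER n p).real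
      {ω | s * n / 2 ≤ |∑ e, ind ω e - (Finset.univ : Finset (EdgeIdx n)).card * p|} ≤
        1 / n := by
    refine (hoeffding_edges h0 h1 Finset.univ (by positivity)).trans ?_
    have : Real.exp (-2 * (s * n / 2) ^ 2 / (Finset.univ : Finset (EdgeIdx n)).card) ≤
        Real.exp (-(Real.log n + Real.log 2)) := by
      rw [Real.exp_le_exp, card_edges, ← hs2, div_le_iff₀ (by positivity)]
      nlinarith [mul_nonneg (sq_nonneg s) hn0.le]
    rw [Real.exp_neg, Real.exp_add, Real.exp_log hn0, Real.exp_log two_pos] at this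
    calc _ ≤ 2 * ((n : ℝ) * 2)⁻¹ := by linarith
      _ = 1 / n := by field_simp
  have hunion : (ER n p).real
      (⋃ v : Fin n, {ω | t ≤ |∑ e ∈ vertexEdges n v, ind ω e - (vertexEdges n v).card * p|}) ≤ 2 / n := by
    refine (measureReal_iUnion_fintype_le _).trans ((Finset.sum_le_sum fun v _ => hdeg v).trans ?_)
    simp only [Finset.sum_const, Finset.card_univ, Fintype.card_fin, nsmul_eq_mul]
    apply le_of_eq
    field_simp
  refine (measureReal_union_le _ _).trans ?_
  calc _ ≤ 2 / (n : ℝ) + 1 / n := add_le_add hunion havg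
    _ = 3 / n := by ring

lemma good_of_not_bad {n : ℕ} (hn : 100 ≤ n) {p t s : ℝ}
    (hp1 : 5 * Real.log n / ((n : ℝ) - 1) ≤ p)
    (hp2 : p ≤ 1 - 5 * Real.log n / ((n : ℝ) - 1)) (ht : 0 ≤ t)
    (hs : 0 ≤ s) (ht2 : t ^ 2 = ((n : ℝ) - 1) * Real.log n)
    (hs2 : s ^ 2 = Real.log n + Real.log 2) {ω : EdgeIdx n → Bool} (hω : ω ∉ badSet n p t s) :
    DJMSplus n (ERdeg n ω) := by
  have hn' : (100 : ℝ) ≤ n := by exact_mod_cast hn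
  have hN : (0 : ℝ) < (n : ℝ) - 1 := by linarith
  have hn0 : (0 : ℝ) < n := by linarith
  obtain ⟨hL, hLN⟩ := log_bounds hn
  obtain ⟨c1, c2, c3⟩ := numerics (by linarith) hL hLN ht hs ht2 hs2
  have hp1' : 5 * Real.log n ≤ p * (n - 1) := (div_le_iff₀ hN).1 hp1
  have hp2' : 5 * Real.log n ≤ (1 - p) * (n - 1) := (div_le_iff₀ hN).1 (by linarith)
  simp only [badSet, Set.mem_union, Set.mem_iUnion, Set.mem_ofPred_eq, not_or, not_exists, not_le,
    card_vertexEdges, card_edges, Nat.cast_sub (show 1 ≤ n by omega), Nat.cast_one] at hω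
  obtain ⟨hdeg, havg⟩ := hω
  obtain ⟨μ, hμ⟩ : ∃ μ : ℝ, ∑ e, ind ω e = n * μ / 2 :=
    ⟨2 * (∑ e, ind ω e) / n, by field_simp⟩
  have hμs : |μ - (n - 1) * p| < s := by
    rw [hμ, show (n : ℝ) * μ / 2 - n * (n - 1) / 2 * p = n / 2 * (μ - (n - 1) * p) by ring, abs_mul,
      abs_of_pos (by positivity : (0 : ℝ) < n / 2),
      show s * n / 2 = n / 2 * s by ring] at havg
    exact lt_of_mul_lt_mul_left havg (by positivity)
  obtain ⟨hμ1, hμ2⟩ := abs_lt.1 hμs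
  refine djms_of_spread (μ := μ) (T := t + s) (μ₀ := 9 / 2 * Real.log n) (by omega) _ ?_ ?_
    (by linarith) (by linarith) (by linarith) c2 c3
  · rw [sum_ERdeg, hμ]; ring
  · intro v
    have := hdeg v
    rw [← ERdeg_eq] at this
    obtain ⟨h1, h2⟩ := abs_lt.1 this
    exact abs_le.2 ⟨by linarith, by linarith⟩

/-- Let `n ≥ 100` and `5·log n/(n−1) ≤ p ≤ 1 − 5·log n/(n−1)`.  In the
Erdős–Rényi random graph `G(n,p)` (each of the `C(n,2)` possible edges present
independently with probability `p`, modelled by the product Bernoulli measure), the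
probability that the degree sequence belongs to `𝒟_{JMS+}` is at least `1 − 3/n`. -/
theorem stmt17 (n : ℕ) (hn : 100 ≤ n) (p : ℝ)
    (hp1 : 5 * Real.log n / ((n : ℝ) - 1) ≤ p)
    (hp2 : p ≤ 1 - 5 * Real.log n / ((n : ℝ) - 1)) :
    1 - 3 / (n : ℝ≥0∞) ≤
      Measure.pi (fun _ : EdgeIdx n => bern p)
        {ω : EdgeIdx n → Bool | DJMSplus n (ERdeg n ω)} := by
  have hn' : (100 : ℝ) ≤ n := by exact_mod_cast hn
  have hL := (log_bounds hn).1
  have hq : 0 ≤ 5 * Real.log n / ((n : ℝ) - 1) := div_nonneg (by linarith) (by linarith)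
  have h0 : 0 ≤ p := hq.trans hp1
  have h1 : p ≤ 1 := by linarith
  have := bern_prob h0 h1
  have hlog := Real.log_two_gt_d9
  have ht2 := Real.sq_sqrt (show 0 ≤ ((n : ℝ) - 1) * Real.log n from
    mul_nonneg (by linarith) (by linarith))
  have hs2 := Real.sq_sqrt (show 0 ≤ Real.log n + Real.log 2 by linarith)
  set t := √(((n : ℝ) - 1) * Real.log n)
  set s := √(Real.log n + Real.log 2)
  have ht : 0 ≤ t := Real.sqrt_nonneg _
  have hs : 0 ≤ s := Real.sqrt_nonneg _
  have hbad : ER n p (badSet n p t s) ≤ 3 / (n : ℝ≥0∞) := by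
    rw [← ofReal_measureReal]
    refine (ENNReal.ofReal_le_ofReal (bad_le hn h0 h1 ht hs ht2 hs2)).trans (le_of_eq ?_)
    rw [ENNReal.ofReal_div_of_pos (by linarith), ENNReal.ofReal_natCast]
    norm_num
  have hcover : (Set.univ : Set (EdgeIdx n → Bool)) ⊆
      {ω | DJMSplus n (ERdeg n ω)} ∪ badSet n p t s := by
    intro ω _
    by_cases hω : ω ∈ badSet n p t s
    · exact Or.inr hω
    · exact Or.inl (good_of_not_bad hn hp1 hp2 ht hs ht2 hs2 hω)
  rw [tsub_le_iff_right]
  calc (1 : ℝ≥0∞) = ER n p Set.univ := measure_univ.symm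
    _ ≤ _ := measure_mono hcover
    _ ≤ _ := measure_union_le _ _
    _ ≤ _ := add_le_add_right hbad _
end
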